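/- Let u be a fuzzy number with only finitely many points of discontinuity in [u]₀. Then there exists a sequence (v_n) of differentiable fuzzy numbers (smoothers) such that u ∇ v_n is a differentiable fuzzy number for every n, and d_∞(u ∇ v_n, u) → 0 as n → ∞. -/

import Mathlib

open Set Filter Topology

structure FuzzyNumber where
  u : ℝ → ℝ
  mem_unit : ∀ x, u x ∈ Set.Icc (0:ℝ) 1
  lo : ℝ → ℝ
  hi : ℝ → ℝ
  cut_eq : ∀ α ∈ Set.Ioc (0:ℝ) 1, {x | α ≤ u x} = Set.Icc (lo α) (hi α)
  cut0_eq : closure {x | 0 < u x} = Set.Icc (lo 0) (hi 0)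
  one_cut_nonempty : ∃ x, 1 ≤ u x

noncomputable def dInf (u v : FuzzyNumber) : ℝ :=
  ⨆ α : Set.Icc (0:ℝ) 1, max |u.lo α - v.lo α| |u.hi α - v.hi α|

noncomputable def conv (u v : ℝ → ℝ) (x : ℝ) : ℝ :=
  ⨆ y : ℝ, min (u y) (v (x - y))

noncomputable def wp (p x : ℝ) : ℝ :=
  if x ∈ Set.Icc (-p) p then 1 - (x / p) ^ 2 else 0

def FuzzyNumber.IsDifferentiable (v : FuzzyNumber) : Prop :=
  ∀ x ∈ Set.Ioo (v.lo 0) (v.hi 0), DifferentiableAt ℝ v.u x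

open MeasureTheory Metric

noncomputable def zmu : Measure ℝ := volume.restrict (Icc (-1:ℝ) 2)

instance : IsFiniteMeasure zmu := by unfold zmu; infer_instance

def Sm (C D : Set ℝ) : Prop := ∀ x ∈ C, ∀ ε : ℝ, 0 < ε → ∀ᶠ r in 𝓝[>] (0:ℝ),
  zmu (closedBall x r \ D) ≤ ENNReal.ofReal (ε * r)

lemma lm (C A : Set ℝ) (hC : IsClosed C) (hne : C.Nonempty) (hA : MeasurableSet A) (ε : ℝ) (hε : 0 < ε) :
    ∃ Q, IsClosed Q ∧ C ⊆ Q ∧ Q ⊆ C ∪ A ∧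
      (∀ x ∈ C, ∀ r : ℝ, 0 < r → zmu (closedBall x r \ Q) ≤ zmu (closedBall x r \ A) + ENNReal.ofReal (ε * r^2)) ∧
      zmu Qᶜ ≤ zmu Aᶜ + ENNReal.ofReal ε := by
  have h1 : ∀ k : ℕ, ∃ O, Aᶜ ⊆ O ∧ IsOpen O ∧ zmu (O \ Aᶜ) < ENNReal.ofReal (ε * (1/2)^(k+1) * ((1/2)^(k+1))^2) := by
    intro k
    obtain ⟨O, h1, h2, h3, h4⟩ := hA.compl.exists_isOpen_sdiff_lt (μ := zmu) (measure_ne_top _ _)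
      (ε := ENNReal.ofReal (ε * (1/2)^(k+1) * ((1/2)^(k+1))^2)) (by
        have : 0 < (ε * (1/2)^(k+1) * ((1/2)^(k+1))^2) := by positivity
        simpa using this)
    exact ⟨O, h1, h2, h4⟩
  choose O hO1 hO2 hO3 using h1
  have hsum : ∀ c : ℝ, 0 ≤ c → ∑' k : ℕ, ENNReal.ofReal (c * (1/2)^(k+1)) = ENNReal.ofReal c := by
    intro c hc
    have hs : HasSum (fun k : ℕ => c * (1/2:ℝ)^(k+1)) c := by
      have := (hasSum_geometric_two).mul_left (c/2)
      have e : (fun k : ℕ => c * (1/2:ℝ)^(k+1)) = fun k => c/2 * (1/2:ℝ)^k := by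
        ext k; rw [pow_succ]; ring
      rw [e]
      have e2 : c / 2 * 2 = c := by ring
      rwa [e2] at this
    rw [← ENNReal.ofReal_tsum_of_nonneg _ hs.summable, hs.tsum_eq]
    intro k; positivity
  set V : ℕ → Set ℝ := fun k => O k ∩ {y | (1/2:ℝ)^(k+1) < infDist y C} with hV
  have hVo : ∀ k, IsOpen (V k) := fun k =>
    (hO2 k).inter (isOpen_lt continuous_const (continuous_infDist_pt C))
  have key : ∀ (S : Set ℝ) (b : ℝ), 0 ≤ b → (∀ k, zmu ((S ∩ V k) \ Aᶜ) ≤ ENNReal.ofReal (b * (1/2)^(k+1))) →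
      zmu (S ∩ ⋃ k, V k) ≤ zmu (S \ A) + ENNReal.ofReal b := by
    intro S b hb hk
    calc zmu (S ∩ ⋃ k, V k) ≤ zmu ((S \ A) ∪ ⋃ k, ((S ∩ V k) \ Aᶜ)) := by
          apply measure_mono
          rintro y ⟨hy, hy2⟩
          obtain ⟨k, hk⟩ := mem_iUnion.1 hy2
          by_cases hyA : y ∈ A
          · right; exact mem_iUnion.2 ⟨k, ⟨hy, hk⟩, fun h => h hyA⟩
          · left; exact ⟨hy, hyA⟩
      _ ≤ zmu (S \ A) + ∑' k, zmu ((S ∩ V k) \ Aᶜ) :=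
          (measure_union_le _ _).trans (by gcongr; exact measure_iUnion_le _)
      _ ≤ zmu (S \ A) + ∑' k : ℕ, ENNReal.ofReal (b * (1/2)^(k+1)) := by
          gcongr with k; exact hk k
      _ = _ := by rw [hsum b hb]
  refine ⟨(⋃ k, V k)ᶜ, (isOpen_iUnion hVo).isClosed_compl, ?_, ?_, ?_, ?_⟩
  · intro x hx
    simp only [hV, mem_compl_iff, mem_iUnion, mem_inter_iff, mem_ofPred_eq, not_exists, not_and, not_lt]
    intro k _
    rw [infDist_zero_of_mem hx]; positivity
  · intro y hy
    by_contra hcon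
    simp only [mem_union, not_or] at hcon
    have hp : 0 < infDist y C := (hC.notMem_iff_infDist_pos hne).1 hcon.1
    obtain ⟨k, hk⟩ := exists_pow_lt_of_lt_one hp (by norm_num : (1/2:ℝ) < 1)
    apply hy
    refine mem_iUnion.2 ⟨k, hO1 k hcon.2, ?_⟩
    refine lt_of_le_of_lt ?_ hk
    exact pow_le_pow_of_le_one (by norm_num) (by norm_num) (by omega)
  · intro x hx r hr
    rw [sdiff_compl]
    apply key _ _ (by positivity)
    intro k
    by_cases hk : (1/2:ℝ)^(k+1) < r
    · calc _ ≤ zmu (O k \ Aᶜ) := measure_mono (fun y hy => ⟨hy.1.2.1, hy.2⟩)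
        _ ≤ _ := (hO3 k).le
        _ ≤ _ := by
          apply ENNReal.ofReal_le_ofReal
          have : ((1/2:ℝ)^(k+1))^2 ≤ r^2 := by gcongr
          calc _ ≤ ε * (1/2)^(k+1) * r^2 := by gcongr
            _ = _ := by ring
    · have : (closedBall x r ∩ V k) = ∅ := by
        ext y
        simp only [mem_inter_iff, mem_closedBall, hV, mem_ofPred_eq, mem_empty_iff_false, iff_false]
        rintro ⟨h1, _, h2⟩
        have := infDist_le_dist_of_mem (x := y) hx
        linarith
      simp [this]
  · rw [compl_compl]
    have := key univ ε hε.le (fun k => by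
      calc _ ≤ zmu (O k \ Aᶜ) := measure_mono (fun y hy => ⟨hy.1.2.1, hy.2⟩)
        _ ≤ _ := (hO3 k).le
        _ ≤ _ := by
          apply ENNReal.ofReal_le_ofReal
          have : ((1/2:ℝ)^(k+1))^2 ≤ 1 := by
            rw [← pow_mul]; exact pow_le_one₀ (by norm_num) (by norm_num)
          calc _ ≤ ε * (1/2)^(k+1) * 1 := by gcongr
            _ = _ := by ring)
    simpa [compl_eq_univ_sdiff] using this

lemma ofReal_quad (c ε : ℝ) (hε : 0 < ε) (hc : 0 < c): ∀ᶠ r in 𝓝[>] (0:ℝ), ENNReal.ofReal (c * r^2) ≤ ENNReal.ofReal (ε * r) := by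
  have : ∀ᶠ r in 𝓝[>] (0:ℝ), r < ε / c := 
    mem_nhdsWithin_of_mem_nhds (Iio_mem_nhds (by positivity))
  filter_upwards [this, self_mem_nhdsWithin] with r h1 h2
  apply ENNReal.ofReal_le_ofReal
  have h2 : 0 < r := h2
  rw [lt_div_iff₀ hc] at h1
  nlinarith

lemma zmu_ball (x r : ℝ) : zmu (closedBall x r) ≤ ENNReal.ofReal (2 * r) := by
  rw [← Real.volume_closedBall]
  exact Measure.restrict_apply_le _ _

lemma zmid (C D : Set ℝ) (hC : IsClosed C) (hD : IsClosed D) (hne : C.Nonempty) (hCD : C ⊆ D)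
    (h : Sm C D) : ∃ Q, IsClosed Q ∧ C ⊆ Q ∧ Q ⊆ D ∧ Sm C Q ∧ Sm Q D := by
  have hae := Besicovitch.ae_tendsto_measure_inter_div_of_measurableSet zmu hD.measurableSet.compl
  rw [ae_iff] at hae
  set B := {a | ¬Tendsto (fun r => zmu (Dᶜ ∩ closedBall a r) / zmu (closedBall a r)) (𝓝[>] 0) (𝓝 ((Dᶜ).indicator 1 a))} with hB
  set N := toMeasurable zmu B
  have hN : zmu N = 0 := by rw [measure_toMeasurable]; exact hae
  obtain ⟨Q, h1, h2, h3, h4, -⟩ := lm C (D \ N) hC hne (hD.measurableSet.diff (measurableSet_toMeasurable _ _)) 1 one_pos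
  refine ⟨Q, h1, h2, ?_, ?_, ?_⟩
  · intro x hx
    rcases h3 hx with h | h
    · exact hCD h
    · exact h.1
  · intro x hx ε hε
    filter_upwards [h x hx (ε/2) (by positivity), ofReal_quad 1 (ε/2) (by positivity) one_pos, self_mem_nhdsWithin] with r hr1 hr2 hr0
    have hr0 : 0 < r := hr0
    calc _ ≤ _ := h4 x hx r hr0
      _ ≤ (zmu (closedBall x r \ D) + zmu N) + ENNReal.ofReal (ε/2 * r) := by
        gcongr
        refine (measure_mono ?_).trans (measure_union_le _ _)
        intro y hy
        by_cases hyD : y ∈ D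
        · right; by_contra hh; exact hy.2 ⟨hyD, hh⟩
        · left; exact ⟨hy.1, hyD⟩
      _ ≤ ENNReal.ofReal (ε/2 * r) + ENNReal.ofReal (ε/2 * r) := by
        rw [hN, add_zero]; gcongr
      _ = _ := by rw [← ENNReal.ofReal_add (by positivity) (by positivity)]; congr 1; ring
  · intro x hx ε hε
    rcases h3 hx with hxC | hxA
    · exact h x hxC ε hε
    · have hxB : x ∉ B := fun hb => hxA.2 (subset_toMeasurable _ _ hb)
      simp only [hB, mem_ofPred_eq, not_not] at hxB
      have hi : (Dᶜ).indicator (1 : ℝ → ENNReal) x = 0 := by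
        apply indicator_of_notMem; simpa using hxA.1
      rw [hi] at hxB
      have hpos : (0:ENNReal) < ENNReal.ofReal (ε/2) := by simpa using hε
      filter_upwards [hxB.eventually (ge_mem_nhds hpos), self_mem_nhdsWithin] with r hr hr0
      have hr0 : 0 < r := hr0
      have e : closedBall x r \ D = Dᶜ ∩ closedBall x r := by
        rw [sdiff_eq, inter_comm]
      rw [e]
      by_cases hz : zmu (closedBall x r) = 0
      · rw [measure_mono_null inter_subset_right hz]; exact zero_le
      · rw [ENNReal.div_le_iff hz (measure_ne_top _ _)] at hr
        calc _ ≤ _ := hr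
          _ ≤ ENNReal.ofReal (ε/2) * ENNReal.ofReal (2*r) := by gcongr; exact zmu_ball x r
          _ = _ := by rw [← ENNReal.ofReal_mul (by positivity)]; congr 1; ring

structure ZGood (s : ℕ → Set ℝ) : Prop where
  cl : ∀ n, IsClosed (s n)
  mono : ∀ n, s n ⊆ s (n+1)
  ne : (s 0).Nonempty
  tail : ∀ n, ∀ x ∈ s n, ∀ ε : ℝ, 0 < ε → ∀ᶠ r in 𝓝[>] (0:ℝ),
    ∑' m, zmu (closedBall x r \ s (n+1+m)) ≤ ENNReal.ofReal (ε * r)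

lemma ZGood.ne' {s} (h : ZGood s) : ∀ n, (s n).Nonempty := by
  intro n
  induction n with
  | zero => exact h.ne
  | succ k ih => exact ih.mono (h.mono k)

lemma ZGood.sm {s} (h : ZGood s) (n : ℕ) : Sm (s n) (s (n+1)) := by
  intro x hx ε hε
  filter_upwards [h.tail n x hx ε hε] with r hr
  exact (ENNReal.le_tsum (f := fun m => zmu (closedBall x r \ s (n+1+m))) 0).trans hr

lemma zrefine (s : ℕ → Set ℝ) (h : ZGood s) : ∃ s', ZGood s' ∧ ∀ n, s' (2*n) = s n := by
  have hm := fun n => zmid (s n) (s (n+1)) (h.cl n) (h.cl (n+1)) (h.ne' n) (h.mono n) (h.sm n)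
  choose Q q1 q2 q3 q4 q5 using hm
  set s' : ℕ → Set ℝ := fun m => if m % 2 = 0 then s (m/2) else Q (m/2) with hs'
  have e0 : ∀ n, s' (2*n) = s n := by intro n; simp [hs']
  have e1 : ∀ n, s' (2*n+1) = Q n := by
    intro n
    have : (2*n+1)/2 = n := by omega
    simp [hs', this, Nat.add_mod]
  refine ⟨s', ⟨?_, ?_, ?_, ?_⟩, e0⟩
  · intro n
    rcases Nat.even_or_odd' n with ⟨k, rfl | rfl⟩
    · rw [e0]; exact h.cl k
    · rw [e1]; exact q1 k
  · intro n
    rcases Nat.even_or_odd' n with ⟨k, rfl | rfl⟩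
    · rw [e0, e1]; exact q2 k
    · rw [e1, show 2*k+1+1 = 2*(k+1) by ring, e0]; exact q3 k
  · have := e0 0
    simp only [mul_zero] at this
    rw [this]; exact h.ne
  · intro p x hx ε hε
    rcases Nat.even_or_odd' p with ⟨n, rfl | rfl⟩
    · rw [e0] at hx
      filter_upwards [h.tail n x hx (ε/3) (by positivity), q4 n x hx (ε/3) (by positivity), self_mem_nhdsWithin] with r hr1 hr2 hr0
      have hr0 : 0 < r := hr0
      rw [← tsum_even_add_odd ENNReal.summable ENNReal.summable]
      have a1 : ∀ k, s' (2*n+1+2*k) = Q (n+k) := by intro k; rw [← e1]; congr 1; ring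
      have a2 : ∀ k, s' (2*n+1+(2*k+1)) = s (n+1+k) := by intro k; rw [← e0]; congr 1; ring
      simp only [a1, a2]
      rw [tsum_eq_zero_add' ENNReal.summable]
      have a3 : ∑' k, zmu (closedBall x r \ Q (n+(k+1))) ≤ ∑' m, zmu (closedBall x r \ s (n+1+m)) := by
        apply ENNReal.tsum_le_tsum
        intro k
        apply measure_mono
        apply sdiff_subset_sdiff_right
        have := q2 (n+(k+1))
        rwa [show n + 1 + k = n+(k+1) by ring]
      calc _ ≤ ENNReal.ofReal (ε/3*r) + ENNReal.ofReal (ε/3*r) + ENNReal.ofReal (ε/3*r) := by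
            gcongr
            · exact hr2
            · exact a3.trans hr1
        _ = _ := by
          rw [← ENNReal.ofReal_add (by positivity) (by positivity), ← ENNReal.ofReal_add (by positivity) (by positivity)]; congr 1; ring
    · rw [e1] at hx
      filter_upwards [h.tail (n+1) x (q3 n hx) (ε/4) (by positivity), q5 n x hx (ε/4) (by positivity), self_mem_nhdsWithin] with r hr1 hr2 hr0
      have hr0 : 0 < r := hr0
      rw [← tsum_even_add_odd ENNReal.summable ENNReal.summable]
      have a1 : ∀ k, s' (2*n+1+1+2*k) = s (n+1+k) := by intro k; rw [← e0]; congr 1; ring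
      have a2 : ∀ k, s' (2*n+1+1+(2*k+1)) = Q (n+1+k) := by intro k; rw [← e1]; congr 1; ring
      simp only [a1, a2]
      have a3 : ∑' k, zmu (closedBall x r \ Q (n+1+k)) ≤ ∑' m, zmu (closedBall x r \ s (n+1+m)) := by
        apply ENNReal.tsum_le_tsum
        intro k
        apply measure_mono
        apply sdiff_subset_sdiff_right
        exact q2 (n+1+k)
      have a4 : ∑' m, zmu (closedBall x r \ s (n+1+m)) ≤ ENNReal.ofReal (ε/4*r) + ENNReal.ofReal (ε/4*r) := by
        rw [tsum_eq_zero_add' ENNReal.summable]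
        gcongr
        · refine le_trans (le_of_eq ?_) hr1
          congr 1; ext k; rw [show n+1+(k+1) = n+1+1+k by ring]
      calc _ ≤ (ENNReal.ofReal (ε/4*r) + ENNReal.ofReal (ε/4*r)) + (ENNReal.ofReal (ε/4*r) + ENNReal.ofReal (ε/4*r)) := by
            gcongr
            exact a3.trans a4
        _ = _ := by
          rw [← ENNReal.ofReal_add (by positivity) (by positivity), ← ENNReal.ofReal_add (by positivity) (by positivity)]; congr 1; ring

lemma zbase (E : Set ℝ) (hE : volume E = 0) : ∃ s, ZGood s ∧ (∀ n, Disjoint (s n) E) ∧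
    ∀ n, zmu (s (n+1))ᶜ ≤ ENNReal.ofReal ((1/2)^n) := by
  set N := toMeasurable volume E
  have hN : volume N = 0 := by rw [measure_toMeasurable]; exact hE
  have hN' : zmu N = 0 := le_antisymm ((Measure.restrict_apply_le _ _).trans hN.le) zero_le
  have step : ∀ (n : ℕ) (C : {C : Set ℝ // IsClosed C ∧ C.Nonempty ∧ Disjoint C N}),
      ∃ Q : {C : Set ℝ // IsClosed C ∧ C.Nonempty ∧ Disjoint C N}, C.1 ⊆ Q.1 ∧
      (∀ x ∈ C.1, ∀ r : ℝ, 0 < r → zmu (closedBall x r \ Q.1) ≤ ENNReal.ofReal ((1/2)^n * r^2)) ∧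
      zmu Q.1ᶜ ≤ ENNReal.ofReal ((1/2)^n) := by
    rintro n ⟨C, hC, hne, hd⟩
    obtain ⟨Q, h1, h2, h3, h4, h5⟩ := lm C Nᶜ hC hne (measurableSet_toMeasurable _ _).compl ((1/2)^n) (by positivity)
    refine ⟨⟨Q, h1, hne.mono h2, ?_⟩, h2, ?_, ?_⟩
    · rw [Set.disjoint_left]
      intro a ha haN
      rcases h3 ha with h | h
      · exact Set.disjoint_left.1 hd h haN
      · exact h haN
    · intro x hx r hr
      refine (h4 x hx r hr).trans ?_
      rw [sdiff_compl, measure_mono_null inter_subset_right hN', zero_add]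
    · simpa [hN'] using h5
  choose nx n1 n2 n3 using step
  have hp : ∃ p, p ∉ N := by
    by_contra! hh
    have : N = univ := eq_univ_of_forall hh
    rw [this] at hN; simp at hN
  obtain ⟨p, hp⟩ := hp
  let P : ℕ → {C : Set ℝ // IsClosed C ∧ C.Nonempty ∧ Disjoint C N} := fun n =>
    Nat.rec ⟨{p}, isClosed_singleton, singleton_nonempty p, by simpa using hp⟩ (fun n c => nx n c) n
  have hP : ∀ n, P (n+1) = nx n (P n) := fun n => rfl
  have hmono : Monotone (fun n => (P n).1) := monotone_nat_of_le_succ (fun n => by rw [hP]; exact n1 n _)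
  refine ⟨fun n => (P n).1, ⟨fun n => (P n).2.1, fun n => hmono (Nat.le_succ n), (P 0).2.2.1, ?_⟩, ?_, ?_⟩
  · intro n x hx ε hε
    filter_upwards [ofReal_quad 2 ε hε two_pos, self_mem_nhdsWithin] with r hr hr0
    have hr0 : 0 < r := hr0
    refine le_trans ?_ hr
    have hs : HasSum (fun k : ℕ => (1/2:ℝ)^k * r^2) (2 * r^2) := (hasSum_geometric_two).mul_right _
    rw [← hs.tsum_eq, ENNReal.ofReal_tsum_of_nonneg (fun k => by positivity) hs.summable]
    apply ENNReal.tsum_le_tsum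
    intro k
    have hx' : x ∈ (P (n+k)).1 := hmono (by omega : n ≤ n+k) hx
    have := n2 (n+k) (P (n+k)) x hx' r hr0
    rw [← hP] at this
    rw [show n+1+k = n+k+1 by ring]
    refine this.trans (ENNReal.ofReal_le_ofReal ?_)
    gcongr ?_ * _
    exact pow_le_pow_of_le_one (by norm_num) (by norm_num) (by omega)
  · intro n
    exact (P n).2.2.2.mono_right (subset_toMeasurable _ _)
  · intro n
    have := n3 n (P n)
    rwa [← hP] at this

noncomputable def zT (s : ℕ → Set ℝ) (S : Set ℝ) : ENNReal := ∑' n, zmu (S \ s n)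

lemma zT_mono (s) {S T : Set ℝ} (h : S ⊆ T) : zT s S ≤ zT s T :=
  ENNReal.tsum_le_tsum (fun n => measure_mono (sdiff_subset_sdiff_left h))

lemma zT_union (s : ℕ → Set ℝ) (hs : ZGood s) {S T : Set ℝ} (h : Disjoint S T) (hT : MeasurableSet T) :
    zT s (S ∪ T) = zT s S + zT s T := by
  unfold zT
  rw [← ENNReal.tsum_add]
  congr 1; ext n
  rw [union_sdiff_distrib, measure_union (h.mono sdiff_subset sdiff_subset)
    (hT.diff (hs.cl n).measurableSet)]

lemma zT_refine (s s' : ℕ → Set ℝ) (hs' : ZGood s') (h : ∀ n, s' (2*n) = s n) (S : Set ℝ) :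
    zT s' S ≤ 2 * zT s S ∧ 2 * zT s S ≤ zT s' S + zmu S := by
  unfold zT
  rw [← tsum_even_add_odd (f := fun n => zmu (S \ s' n)) ENNReal.summable ENNReal.summable]
  simp only [h]
  rw [two_mul]
  constructor
  · gcongr with n
    rw [← h]; exact hs'.mono _
  · rw [add_assoc]
    refine add_le_add le_rfl ?_
    rw [tsum_eq_zero_add' ENNReal.summable, add_comm]
    refine add_le_add (ENNReal.tsum_le_tsum fun n => measure_mono (sdiff_subset_sdiff_right ?_)) (measure_mono sdiff_subset)
    rw [← h]; exact hs'.mono (2*n+1)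

lemma zmu_le (S : Set ℝ) : zmu S ≤ volume S := Measure.restrict_apply_le _ _

lemma zseq (E : Set ℝ) (hE : volume E = 0) : ∃ s : ℕ → ℕ → Set ℝ, (∀ k, ZGood (s k)) ∧
    (∀ k n, s (k+1) (2*n) = s k n) ∧ (∀ n, Disjoint (s 0 n) E) ∧
    ∀ n, zmu (s 0 (n+1))ᶜ ≤ ENNReal.ofReal ((1/2)^n) := by
  obtain ⟨s0, h1, h2, h3⟩ := zbase E hE
  have step : ∀ s : {s : ℕ → Set ℝ // ZGood s}, ∃ s' : {s : ℕ → Set ℝ // ZGood s}, ∀ n, s'.1 (2*n) = s.1 n := by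
    rintro ⟨s, hs⟩
    obtain ⟨s', a, b⟩ := zrefine s hs
    exact ⟨⟨s', a⟩, b⟩
  choose nx hn using step
  let P : ℕ → {s : ℕ → Set ℝ // ZGood s} := fun n => Nat.rec ⟨s0, h1⟩ (fun _ c => nx c) n
  exact ⟨fun k => (P k).1, fun k => (P k).2, fun k n => hn (P k) n, h2, h3⟩

set_option maxHeartbeats 1000000 in
lemma zah (E : Set ℝ) (hE : volume E = 0) : ∃ f : ℝ → ℝ, Continuous f ∧
    (∀ x y, x ≤ y → y - x ≤ f y - f x) ∧
    ∀ x ∈ Icc (0:ℝ) 1, (DifferentiableAt ℝ f x ∧ x ∉ E) ∨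
      (∀ M : ℝ, ∀ᶠ y in 𝓝 x, M * |y - x| ≤ |f y - f x|) := by
  obtain ⟨s, hg, hr, hd, hm⟩ := zseq E hE
  have hfin0 : zT (s 0) univ ≠ ⊤ := by
    unfold zT
    rw [tsum_eq_zero_add' ENNReal.summable]
    apply ENNReal.add_ne_top.2 ⟨measure_ne_top _ _, ?_⟩
    have hs : HasSum (fun k : ℕ => (1/2:ℝ)^k) 2 := (hasSum_geometric_two)
    refine ne_top_of_le_ne_top (b := ENNReal.ofReal 2) ENNReal.ofReal_ne_top ?_
    rw [← hs.tsum_eq, ENNReal.ofReal_tsum_of_nonneg (fun k => by positivity) hs.summable]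
    apply ENNReal.tsum_le_tsum
    intro k
    rw [← compl_eq_univ_sdiff]; exact hm k
  have hfin : ∀ k S, zT (s k) S ≠ ⊤ := by
    intro k S
    refine ne_top_of_le_ne_top ?_ (zT_mono (s k) (subset_univ S))
    induction k with
    | zero => exact hfin0
    | succ k ih =>
      exact ne_top_of_le_ne_top (ENNReal.mul_ne_top (by norm_num) ih) (zT_refine _ _ (hg (k+1)) (hr k) univ).1
  set R : ℕ → Set ℝ → ℝ := fun k S => (zT (s k) S).toReal / 2^k with hR
  have hR0 : ∀ k S, 0 ≤ R k S := fun k S => by positivity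
  have hR1 : ∀ k S, R (k+1) S ≤ R k S := by
    intro k S
    have := ENNReal.toReal_mono (ENNReal.mul_ne_top (by norm_num) (hfin k S)) (zT_refine _ _ (hg (k+1)) (hr k) S).1
    rw [ENNReal.toReal_mul] at this
    simp only [ENNReal.toReal_ofNat] at this
    simp only [hR]
    rw [div_le_div_iff₀ (by positivity) (by positivity), pow_succ]
    have hp : (0:ℝ) < 2^k := by positivity
    nlinarith
  have hR2 : ∀ k S, R k S ≤ R (k+1) S + zmu.real S / 2^(k+1) := by
    intro k S
    have := ENNReal.toReal_mono (ENNReal.add_ne_top.2 ⟨hfin (k+1) S, measure_ne_top zmu S⟩) (zT_refine _ _ (hg (k+1)) (hr k) S).2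
    rw [ENNReal.toReal_mul, ENNReal.toReal_add (hfin _ _) (measure_ne_top _ _)] at this
    simp only [ENNReal.toReal_ofNat] at this
    simp only [hR, Measure.real]
    rw [← add_div, div_le_div_iff₀ (by positivity) (by positivity), pow_succ]
    have hp : (0:ℝ) < 2^k := by positivity
    nlinarith
  have hRadd : ∀ k x y, x ≤ y → R k (Iic y) = R k (Iic x) + R k (Ioc x y) := by
    intro k x y hxy
    simp only [hR]
    rw [← Iic_union_Ioc_eq_Iic hxy, zT_union (s k) (hg k) (by
      rw [Set.disjoint_left]; intro a ha hb; exact absurd hb.1 (not_lt.2 ha)) measurableSet_Ioc,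
      ENNReal.toReal_add (hfin _ _) (hfin _ _), add_div]
  have hlim : ∀ S, ∃ l, Tendsto (fun k => R k S) atTop (𝓝 l) := fun S =>
    ⟨_, tendsto_atTop_ciInf (antitone_nat_of_succ_le (fun k => hR1 k S)) ⟨0, by rintro _ ⟨k, rfl⟩; exact hR0 k S⟩⟩
  choose L hL using hlim
  have hLR : ∀ k S, L S ≤ R k S := fun k S =>
    (antitone_nat_of_succ_le (fun k => hR1 k S)).le_of_tendsto (hL S) k
  have hRL : ∀ k S, R k S ≤ L S + zmu.real S / 2^k := by
    intro k S
    have hmon : Monotone (fun k => R k S - zmu.real S / 2^k) := by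
      apply monotone_nat_of_le_succ
      intro k
      have := hR2 k S
      have e : zmu.real S / 2^k = 2 * (zmu.real S / 2^(k+1)) := by rw [pow_succ]; field_simp
      rw [e]; linarith
    have ht : Tendsto (fun k : ℕ => R k S - zmu.real S / 2^k) atTop (𝓝 (L S - 0)) := by
      apply (hL S).sub
      apply Tendsto.const_div_atTop
      exact tendsto_pow_atTop_atTop_of_one_lt (by norm_num)
    have := hmon.ge_of_tendsto ht k
    linarith
  have hL0 : ∀ S, 0 ≤ L S := fun S => ge_of_tendsto' (hL S) (fun k => hR0 k S)
  have hLadd : ∀ x y, x ≤ y → L (Iic y) = L (Iic x) + L (Ioc x y) := by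
    intro x y hxy
    apply tendsto_nhds_unique (hL (Iic y))
    have := (hL (Iic x)).add (hL (Ioc x y))
    exact this.congr (fun k => (hRadd k x y hxy).symm)
  have hreal : ∀ x y, zmu.real (uIoc x y) ≤ |y - x| := by
    intro x y
    have := ENNReal.toReal_mono (by simp [uIoc]) (zmu_le (uIoc x y))
    rwa [Real.volume_uIoc, ENNReal.toReal_ofReal (abs_nonneg _)] at this
  set g : ℝ → ℝ := fun y => L (Iic y) with hgdef
  have hgabs : ∀ x y, |g y - g x| = L (uIoc x y) := by
    intro x y
    rcases le_total x y with h | h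
    · simp only [hgdef, hLadd x y h, uIoc_of_le h]
      rw [add_sub_cancel_left, abs_of_nonneg (hL0 _)]
    · rw [abs_sub_comm]
      simp only [hgdef, hLadd y x h, uIoc_of_ge h]
      rw [add_sub_cancel_left, abs_of_nonneg (hL0 _)]
  have hgmono : Monotone g := by
    intro x y h
    simp only [hgdef, hLadd x y h]
    linarith [hL0 (Ioc x y)]
  have hgcont : Continuous g := by
    have hc0 : Continuous (fun y => R 0 (Iic y)) := by
      have e : (fun y => R 0 (Iic y)) = fun y => ∑' n, zmu.real (Iic y \ s 0 n) := by
        ext y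
        simp only [hR, zT, pow_zero, div_one, Measure.real]
        rw [ENNReal.tsum_toReal_eq (fun n => measure_ne_top _ _)]
      rw [e]
      have hsum : Summable (fun n => zmu.real (univ \ s 0 n)) := ENNReal.summable_toReal (hfin 0 univ)
      apply continuous_tsum _ hsum
      · intro n y
        rw [Real.norm_of_nonneg measureReal_nonneg]
        exact measureReal_mono (sdiff_subset_sdiff_left (subset_univ _))
      · intro n
        have : LipschitzWith 1 (fun y => zmu.real (Iic y \ s 0 n)) := by
          apply LipschitzWith.of_le_add
          intro x y
          have hsub : Iic x \ s 0 n ⊆ (Iic y \ s 0 n) ∪ uIoc x y := by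
            intro z hz
            by_cases h : z ≤ y
            · left; exact ⟨h, hz.2⟩
            · right; rw [uIoc_comm]; rw [mem_uIoc]; exact Or.inl ⟨not_le.1 h, hz.1⟩
          have h1 := (measureReal_mono (μ := zmu) hsub).trans (measureReal_union_le _ _)
          have h2 := hreal x y
          rw [Real.dist_eq, abs_sub_comm]
          linarith
        exact this.continuous
    rw [continuous_iff_continuousAt]
    intro x
    rw [ContinuousAt, tendsto_iff_dist_tendsto_zero]
    have h0 := tendsto_iff_dist_tendsto_zero.1 (hc0.tendsto x)
    refine squeeze_zero (fun _ => dist_nonneg) (fun y => ?_) h0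
    rw [Real.dist_eq, Real.dist_eq, hgabs]
    refine (hLR 0 _).trans ?_
    rcases le_total x y with h | h
    · rw [hRadd 0 x y h, uIoc_of_le h, add_sub_cancel_left]; exact le_abs_self _
    · rw [abs_sub_comm, hRadd 0 y x h, uIoc_of_ge h, add_sub_cancel_left]; exact le_abs_self _
  have hsmono : ∀ k, Monotone (s k) := fun k => monotone_nat_of_le_succ (hg k).mono
  have hball : ∀ x y : ℝ, uIoc x y ⊆ closedBall x |y - x| := by
    intro x y z hz
    rw [mem_closedBall, Real.dist_eq]
    rw [uIoc_eq_union] at hz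
    rcases hz with hz | hz
    · rw [abs_of_pos (by linarith [hz.1]), abs_of_pos (by linarith [hz.1, hz.2])]; linarith [hz.2]
    · rw [abs_of_nonpos (by linarith [hz.2]), abs_of_nonpos (by linarith [hz.1, hz.2])]; linarith [hz.1]
  have hmeas : ∀ x ∈ Icc (0:ℝ) 1, ∀ᶠ y in 𝓝 x, zmu (uIoc x y) = ENNReal.ofReal |y - x| := by
    intro x hx
    filter_upwards [Ioo_mem_nhds (show x - 1 < x by linarith) (show x < x + 1 by linarith)] with y hy
    rw [zmu, Measure.restrict_eq_self, Real.volume_uIoc]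
    intro z hz
    have := hball x y hz
    rw [mem_closedBall, Real.dist_eq, abs_le] at this
    have h2 : |y - x| ≤ 1 := by rw [abs_le]; constructor <;> linarith [hy.1, hy.2]
    exact ⟨by linarith [hx.1], by linarith [hx.2]⟩
  have lower : ∀ x ∈ Icc (0:ℝ) 1, ∀ k n, (∀ j < n, x ∉ s k j) →
      ∀ᶠ y in 𝓝 x, (n - 1 : ℝ) / 2^k * |y - x| ≤ |g y - g x| := by
    intro x hx k n hn
    have h1 : ∀ᶠ y in 𝓝 x, ∀ j < n, Disjoint (uIoc x y) (s k j) := by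
      have : ∀ᶠ y in 𝓝 x, ∀ j ∈ Finset.range n, Disjoint (uIoc x y) (s k j) := by
        rw [Filter.eventually_all_finset]
        intro j hj
        have ho := ((hg k).cl j).isOpen_compl.mem_nhds (hn j (Finset.mem_range.1 hj))
        obtain ⟨δ, hδ, hb⟩ := Metric.mem_nhds_iff.1 ho
        filter_upwards [Metric.ball_mem_nhds x hδ] with y hy
        rw [Set.disjoint_left]
        intro z hz
        apply hb
        have := hball x y hz
        rw [mem_closedBall] at this
        rw [mem_ball, Real.dist_eq] at hy
        exact lt_of_le_of_lt this hy
      simpa using this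
    filter_upwards [h1, hmeas x hx] with y hy hy2
    have h3 : ENNReal.ofReal (n * |y - x|) ≤ zT (s k) (uIoc x y) := by
      calc _ = ∑ j ∈ Finset.range n, zmu (uIoc x y \ s k j) := by
            rw [Finset.sum_congr rfl (fun j hj => by
              rw [(hy j (Finset.mem_range.1 hj)).sdiff_eq_left, hy2])]
            simp [ENNReal.ofReal_mul]
        _ ≤ _ := ENNReal.sum_le_tsum _
    have h4 := (ENNReal.ofReal_le_iff_le_toReal (hfin _ _)).1 h3
    have h5 := hRL k (uIoc x y)
    have h6 := hreal x y
    rw [hgabs]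
    simp only [hR] at h5
    have hp : (0:ℝ) < 2^k := by positivity
    have : (n * |y-x|)/2^k ≤ L (uIoc x y) + |y-x| / 2^k := by
      calc _ ≤ (zT (s k) (uIoc x y)).toReal / 2^k := by gcongr
        _ ≤ _ := h5
        _ ≤ _ := by gcongr
    calc _ = (n * |y-x|)/2^k - |y-x|/2^k := by ring
      _ ≤ _ := by linarith
  have upper : ∀ x ∈ Icc (0:ℝ) 1, ∀ k n, x ∈ s k n → 
      ∀ᶠ y in 𝓝[≠] x, |g y - g x| ≤ (n + 2 : ℝ) / 2^k * |y - x| := by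
    intro x hx k n hn
    have h1 := (hg k).tail n x hn 1 one_pos
    have ht : Tendsto (fun y => |y - x|) (𝓝[≠] x) (𝓝[>] 0) := by
      apply tendsto_nhdsWithin_iff.2 ⟨?_, ?_⟩
      · have : Continuous (fun y : ℝ => |y - x|) := by fun_prop
        have := this.tendsto x
        simp only [sub_self, abs_zero] at this
        exact this.mono_left nhdsWithin_le_nhds
      · filter_upwards [self_mem_nhdsWithin] with y hy
        exact abs_pos.2 (sub_ne_zero.2 hy)
    filter_upwards [ht.eventually h1, nhdsWithin_le_nhds (hmeas x hx)] with y hy hy2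
    rw [hgabs]
    refine (hLR k _).trans ?_
    have h3 : zT (s k) (uIoc x y) ≤ ENNReal.ofReal ((n+2) * |y-x|) := by
      unfold zT
      rw [← Summable.sum_add_tsum_nat_add' (k := n+1) ENNReal.summable]
      calc _ ≤ ∑ j ∈ Finset.range (n+1), ENNReal.ofReal |y-x| + ENNReal.ofReal (1 * |y-x|) := by
            refine add_le_add (Finset.sum_le_sum fun j _ => ?_) ?_
            · rw [← hy2]; exact measure_mono sdiff_subset
            · refine le_trans ?_ hy
              apply ENNReal.tsum_le_tsum
              intro m
              rw [show m + (n+1) = n+1+m by ring]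
              exact measure_mono (sdiff_subset_sdiff_left (hball x y))
        _ = _ := by
          rw [← ENNReal.ofReal_sum_of_nonneg (fun _ _ => abs_nonneg _), ← ENNReal.ofReal_add (by positivity) (by positivity)]
          congr 1
          simp; ring
    have h4 := ENNReal.toReal_mono ENNReal.ofReal_ne_top h3
    rw [ENNReal.toReal_ofReal (by positivity)] at h4
    simp only [hR]
    calc _ ≤ ((n+2) * |y-x|) / 2^k := by gcongr
      _ = _ := by ring
  have habs : ∀ x y, |(y + g y) - (x + g x)| = |y - x| + |g y - g x| := by
    intro x y
    rcases le_total x y with h | h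
    · have := hgmono h
      rw [abs_of_nonneg (by linarith), abs_of_nonneg (by linarith), abs_of_nonneg (by linarith)]; ring
    · have := hgmono h
      rw [abs_of_nonpos (by linarith), abs_of_nonpos (by linarith), abs_of_nonpos (by linarith)]; ring
  refine ⟨fun y => y + g y, continuous_id.add hgcont, ?_, ?_⟩
  · intro x y h
    have := hgmono h
    simp only; linarith
  · intro x hx
    by_cases hin : ∃ n, x ∈ s 0 n
    · left
      refine ⟨?_, ?_⟩
      swap
      · obtain ⟨n, hn⟩ := hin
        exact Set.disjoint_left.1 (hd n) hn
      have hink : ∀ k, ∃ n, x ∈ s k n := by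
        intro k
        induction k with
        | zero => exact hin
        | succ k ih =>
          obtain ⟨n, hn⟩ := ih
          exact ⟨2*n, by rw [hr]; exact hn⟩
      suffices h : DifferentiableAt ℝ g x from differentiableAt_id.add h
      have hca : Cauchy (map (slope g x) (𝓝[≠] x)) := by
        rw [Metric.cauchy_iff]
        refine ⟨inferInstance, ?_⟩
        intro ε hε
        obtain ⟨k, hk⟩ := exists_pow_lt_of_lt_one (show 0 < ε/3 by positivity) (by norm_num : (1/2:ℝ) < 1)
        classical
        let n := Nat.find (hink k)
        have hl := lower x hx k n (fun j hj => Nat.find_min (hink k) hj)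
        have hu := upper x hx k n (Nat.find_spec (hink k))
        refine ⟨Icc ((n-1:ℝ)/2^k) ((n+2:ℝ)/2^k), ?_, ?_⟩
        · rw [mem_map]
          filter_upwards [nhdsWithin_le_nhds hl, hu, self_mem_nhdsWithin] with y h1 h2 h3
          have hpos : 0 < |y - x| := abs_pos.2 (sub_ne_zero.2 h3)
          have es : slope g x y = |g y - g x| / |y - x| := by
            rw [← abs_div, slope_def_field, abs_of_nonneg]
            rcases le_total x y with h | h
            · exact div_nonneg (by linarith [hgmono h]) (by linarith)
            · exact div_nonneg_of_nonpos (by linarith [hgmono h]) (by linarith)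
          rw [mem_preimage, es]
          exact ⟨by rwa [le_div_iff₀ hpos], by rwa [div_le_iff₀ hpos]⟩
        · intro a ha b hb
          rw [Real.dist_eq, abs_lt]
          have : (n+2:ℝ)/2^k - (n-1:ℝ)/2^k < ε := by
            have : (n+2:ℝ)/2^k - (n-1:ℝ)/2^k = 3 * (1/2)^k := by
              rw [one_div, inv_pow]; field_simp; ring
            rw [this]; linarith
          constructor <;> linarith [ha.1, ha.2, hb.1, hb.2]
      obtain ⟨d, hdd⟩ := CompleteSpace.complete hca
      exact (hasDerivAt_iff_tendsto_slope.2 hdd).differentiableAt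
    · right
      push Not at hin
      intro M
      obtain ⟨n, hn⟩ := exists_nat_ge M
      filter_upwards [lower x hx 0 n (fun j _ => hin j)] with y hy
      rw [habs]
      simp only [pow_zero, div_one] at hy
      nlinarith [abs_nonneg (y-x)]

lemma sup_spec (p : ℝ → Prop) (down : ∀ a b, 0 ≤ a → a ≤ b → b ≤ 1 → p b → p a)
    (lc : ∀ a ∈ Ioc (0:ℝ) 1, (∀ b ∈ Ioo 0 a, p b) → p a) (a : ℝ) (ha : a ∈ Ioc (0:ℝ) 1) :
    a ≤ sSup {b | b ∈ Icc (0:ℝ) 1 ∧ p b} ↔ p a := by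
  have hb : BddAbove {b | b ∈ Icc (0:ℝ) 1 ∧ p b} := ⟨1, fun b hb => hb.1.2⟩
  constructor
  · intro h
    have hne : {b | b ∈ Icc (0:ℝ) 1 ∧ p b}.Nonempty := by
      by_contra hh
      rw [not_nonempty_iff_eq_empty] at hh
      rw [hh, Real.sSup_empty] at h
      linarith [ha.1]
    apply lc a ha
    intro b hb'
    obtain ⟨g, hg, hbg⟩ := exists_lt_of_lt_csSup hne (lt_of_lt_of_le hb'.2 h)
    exact down b g hb'.1.le hbg.le hg.1.2 hg.2
  · intro h
    exact le_csSup hb ⟨⟨ha.1.le, ha.2⟩, h⟩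

lemma sup_unit (p : ℝ → Prop) : sSup {b | b ∈ Icc (0:ℝ) 1 ∧ p b} ∈ Icc (0:ℝ) 1 :=
  ⟨Real.sSup_nonneg (fun b hb => hb.1.1), Real.sSup_le (fun b hb => hb.1.2) zero_le_one⟩

lemma unit_ext {a b : ℝ} (ha : a ∈ Icc (0:ℝ) 1) (hb : b ∈ Icc (0:ℝ) 1)
    (h : ∀ c ∈ Ioc (0:ℝ) 1, c ≤ a ↔ c ≤ b) : a = b := by
  apply le_antisymm
  · rcases ha.1.eq_or_lt with h0 | h0
    · rw [← h0]; exact hb.1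
    · exact (h a ⟨h0, ha.2⟩).1 le_rfl
  · rcases hb.1.eq_or_lt with h0 | h0
    · rw [← h0]; exact ha.1
    · exact (h b ⟨h0, hb.2⟩).2 le_rfl

structure Nice (L : ℝ → ℝ) : Prop where
  mono : MonotoneOn L (Icc 0 1)
  lc : ∀ a ∈ Ioc (0:ℝ) 1, ∀ x, (∀ b ∈ Ioo 0 a, L b ≤ x) → L a ≤ x
  rc : ∀ x, L 0 < x → ∃ b ∈ Ioc (0:ℝ) 1, L b ≤ x

noncomputable def wl (L : ℝ → ℝ) (x : ℝ) : ℝ := sSup {b | b ∈ Icc (0:ℝ) 1 ∧ L b ≤ x}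

lemma Nice.wl_spec {L} (h : Nice L) (x : ℝ) (a : ℝ) (ha : a ∈ Ioc (0:ℝ) 1) : a ≤ wl L x ↔ L a ≤ x :=
  sup_spec (fun b => L b ≤ x)
    (fun _ _ h0 hab h1 hb => (h.mono ⟨h0, hab.trans h1⟩ ⟨h0.trans hab, h1⟩ hab).trans hb)
    (fun a ha hb => h.lc a ha x hb) a ha

lemma wl_unit (L x) : wl L x ∈ Icc (0:ℝ) 1 := sup_unit _

lemma Nice.wl_pos {L} (h : Nice L) (x : ℝ) (hx : L 0 < x) : wl L x ∈ Ioc (0:ℝ) 1 := by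
  obtain ⟨b, hb, hb2⟩ := h.rc x hx
  exact ⟨lt_of_lt_of_le hb.1 ((h.wl_spec x b hb).2 hb2), (wl_unit L x).2⟩

def Expd (f : ℝ → ℝ) : Prop := ∀ x y, x ≤ y → y - x ≤ f y - f x

lemma Nice.add {m f : ℝ → ℝ} (h : Nice m) (hf : Continuous f) (hfe : Expd f) (c : ℝ) (hc : 0 < c) :
    Nice (fun a => m a + c * (f a - f 1)) := by
  have hmf : ∀ a b, a ≤ b → c * f a ≤ c * f b := fun a b hab =>
    mul_le_mul_of_nonneg_left (by linarith [hfe a b hab]) hc.le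
  refine ⟨?_, ?_, ?_⟩
  · intro a ha b hb hab
    have := h.mono ha hb hab
    have := hmf a b hab
    simp only; linarith
  · intro a ha x hx
    have key : ∀ b ∈ Ioo 0 a, m a ≤ x - c * (f b - f 1) := by
      intro b hb
      apply h.lc a ha
      intro b' hb'
      have h1 := hx (max b b') ⟨lt_max_of_lt_left hb.1, max_lt hb.2 hb'.2⟩
      have h2 := hmf b (max b b') (le_max_left _ _)
      have h3 := h.mono ⟨hb'.1.le, hb'.2.le.trans ha.2⟩ ⟨(lt_max_of_lt_left hb.1).le, (max_lt hb.2 hb'.2).le.trans ha.2⟩ (le_max_right b b')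
      linarith
    have : m a ≤ x - c * (f a - f 1) := by
      have ht : Tendsto (fun b => x - c * (f b - f 1)) (𝓝[<] a) (𝓝 (x - c * (f a - f 1))) := by
        have : Continuous (fun b => x - c * (f b - f 1)) := by fun_prop
        exact (this.tendsto a).mono_left nhdsWithin_le_nhds
      apply ge_of_tendsto ht
      filter_upwards [Ioo_mem_nhdsLT ha.1] with b hb
      exact key b hb
    linarith
  · intro x hx
    set δ := (x - (m 0 + c * (f 0 - f 1))) with hδ
    have hδ0 : 0 < δ := by rw [hδ]; linarith
    obtain ⟨b, hb, hb2⟩ := h.rc (m 0 + δ/2) (by linarith)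
    have hcont : Continuous (fun b => c * (f b - f 1)) := by fun_prop
    have h1 : ∀ᶠ b in 𝓝[>] (0:ℝ), c * (f b - f 1) < c * (f 0 - f 1) + δ/2 :=
      nhdsWithin_le_nhds ((hcont.tendsto 0).eventually (gt_mem_nhds (by linarith)))
    obtain ⟨b', h2, h3⟩ := (h1.and (Ioo_mem_nhdsGT hb.1)).exists
    have := h.mono ⟨h3.1.le, h3.2.le.trans hb.2⟩ ⟨hb.1.le, hb.2⟩ h3.2.le
    exact ⟨b', ⟨h3.1, h3.2.le.trans hb.2⟩, by linarith⟩

lemma Nice.key {m f : ℝ → ℝ} (h : Nice m) (hf : Continuous f) (hfe : Expd f) (c : ℝ) (hc : 0 < c)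
    (x y : ℝ) (hx : m 0 + c * (f 0 - f 1) < x) (hxy : x ≤ y) :
    wl (fun a => m a + c * (f a - f 1)) x ≤ wl (fun a => m a + c * (f a - f 1)) y ∧
    c * (f (wl (fun a => m a + c * (f a - f 1)) y) - f (wl (fun a => m a + c * (f a - f 1)) x)) ≤ y - x := by
  have hL := h.add hf hfe c hc
  set L := fun a => m a + c * (f a - f 1) with hLdef
  have hp := hL.wl_pos x hx
  have hq := hL.wl_pos y (lt_of_lt_of_le hx hxy)
  have hle : wl L x ≤ wl L y := by
    rw [hL.wl_spec y _ hp]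
    exact ((hL.wl_spec x _ hp).1 le_rfl).trans hxy
  refine ⟨hle, ?_⟩
  rcases hle.eq_or_lt with he | hlt
  · rw [he]; simpa using hxy
  · set a := wl L x
    set b := wl L y
    have hLb : L b ≤ y := (hL.wl_spec y b hq).1 le_rfl
    have ht : Tendsto (fun g => c * (f b - f g)) (𝓝[>] a) (𝓝 (c * (f b - f a))) := by
      have : Continuous (fun g => c * (f b - f g)) := by fun_prop
      exact (this.tendsto a).mono_left nhdsWithin_le_nhds
    apply le_of_tendsto ht
    filter_upwards [Ioo_mem_nhdsGT hlt] with g hg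
    have hg1 : g ∈ Ioc (0:ℝ) 1 := ⟨hp.1.trans hg.1, hg.2.le.trans hq.2⟩
    have hgx : x < L g := by
      by_contra hh
      have := (hL.wl_spec x g hg1).2 (not_lt.1 hh)
      exact absurd hg.1 (not_lt.2 this)
    have hmm := h.mono ⟨hg1.1.le, hg1.2⟩ ⟨hq.1.le, hq.2⟩ hg.2.le
    simp only [hLdef] at hLb hgx
    linarith

lemma Nice.diff {m f : ℝ → ℝ} (h : Nice m) (hf : Continuous f) (hfe : Expd f) (c : ℝ) (hc : 0 < c)
    (H : ∀ a ∈ Ioc (0:ℝ) 1, (a < 1 ∧ DifferentiableAt ℝ m a ∧ DifferentiableAt ℝ f a) ∨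
      (∀ M : ℝ, ∀ᶠ y in 𝓝 a, M * |y - a| ≤ |f y - f a|))
    (x : ℝ) (hx : m 0 + c * (f 0 - f 1) < x) :
    DifferentiableAt ℝ (wl (fun a => m a + c * (f a - f 1))) x := by
  have hL := h.add hf hfe c hc
  have K := h.key hf hfe c hc
  set L := fun a => m a + c * (f a - f 1) with hLdef
  have hL0 : L 0 < x := hx
  have hev : ∀ᶠ y in 𝓝 x, L 0 < y := lt_mem_nhds hL0
  have K2 : ∀ y, L 0 < y → c * |f (wl L y) - f (wl L x)| ≤ |y - x| ∧ c * |wl L y - wl L x| ≤ |y - x| := by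
    intro y hy
    rcases le_total x y with hxy | hxy
    · obtain ⟨h1, h2⟩ := K x y hL0 hxy
      have h3 := hfe _ _ h1
      rw [abs_of_nonneg (by linarith : 0 ≤ f (wl L y) - f (wl L x)), abs_of_nonneg (by linarith : 0 ≤ y - x), abs_of_nonneg (by linarith : 0 ≤ wl L y - wl L x)]
      exact ⟨h2, by nlinarith⟩
    · obtain ⟨h1, h2⟩ := K y x hy hxy
      have h3 := hfe _ _ h1
      rw [abs_of_nonpos (by linarith : f (wl L y) - f (wl L x) ≤ 0), abs_of_nonpos (by linarith : y - x ≤ 0), abs_of_nonpos (by linarith : wl L y - wl L x ≤ 0)]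
      exact ⟨by linarith, by nlinarith⟩
  have hcont : Tendsto (wl L) (𝓝 x) (𝓝 (wl L x)) := by
    rw [tendsto_iff_dist_tendsto_zero]
    have h0 : Tendsto (fun y => |y - x| / c) (𝓝 x) (𝓝 0) := by
      have : Continuous (fun y => |y - x| / c) := by fun_prop
      simpa using this.tendsto x
    apply squeeze_zero' (Eventually.of_forall fun _ => dist_nonneg) _ h0
    filter_upwards [hev] with y hy
    rw [Real.dist_eq, le_div_iff₀ hc, mul_comm]
    exact (K2 y hy).2
  have hα := hL.wl_pos x hL0
  rcases H _ hα with ⟨h1, hm, hff⟩ | hinf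
  · have hLd : DifferentiableAt ℝ L (wl L x) := hm.add ((hff.sub_const _).const_mul c)
    obtain ⟨d, hd⟩ : ∃ d, HasDerivAt L d (wl L x) := ⟨_, hLd.hasDerivAt⟩
    have hdc : c ≤ d := by
      have ht := (hasDerivAt_iff_tendsto_slope.1 hd).mono_left (nhdsWithin_mono _ (fun z (hz : z ∈ Ioi (wl L x)) => ne_of_gt hz))
      apply ge_of_tendsto ht
      filter_upwards [Ioo_mem_nhdsGT h1] with b hb
      rw [slope_def_field, le_div_iff₀ (by linarith [hb.1])]
      have h2 := h.mono ⟨hα.1.le, hα.2⟩ ⟨hα.1.le.trans hb.1.le, hb.2.le⟩ hb.1.le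
      have h3 := hfe _ _ hb.1.le
      simp only [hLdef] at h2 h3 ⊢
      nlinarith
    have hd0 : 0 < d := lt_of_lt_of_le hc hdc
    have approx : ∀ ε > 0, ∀ᶠ y in 𝓝 x, |y - L (wl L x) - d * (wl L y - wl L x)| ≤ ε * |wl L y - wl L x| := by
      intro ε hε
      have h2 := (hasDerivAt_iff_isLittleO.1 hd).def hε
      have h3 := h2.and (Ioo_mem_nhds hα.1 h1)
      have h4 := hcont.eventually h3.eventually_nhds
      filter_upwards [h4, hev] with y hy hy0
      have hq := hL.wl_pos y hy0
      have hLb : L (wl L y) ≤ y := (hL.wl_spec y _ hq).1 le_rfl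
      have h5 := hy.self_of_nhds
      simp only [smul_eq_mul, Real.norm_eq_abs] at h5 hy
      have h6 := (abs_le.1 h5.1).1
      have h7 : y ≤ L (wl L x) + d * (wl L y - wl L x) + ε * |wl L y - wl L x| := by
        have ht : Tendsto (fun g => L (wl L x) + d * (g - wl L x) + ε * |g - wl L x|) (𝓝[>] (wl L y))
            (𝓝 (L (wl L x) + d * (wl L y - wl L x) + ε * |wl L y - wl L x|)) := by
          have : Continuous (fun g => L (wl L x) + d * (g - wl L x) + ε * |g - wl L x|) := by fun_prop
          exact (this.tendsto (wl L y)).mono_left nhdsWithin_le_nhds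
        apply ge_of_tendsto ht
        filter_upwards [nhdsWithin_le_nhds hy, self_mem_nhdsWithin] with g hg1 hg2
        have hgx : y < L g := by
          by_contra hh
          have := (hL.wl_spec y g ⟨hg1.2.1, hg1.2.2.le⟩).2 (not_lt.1 hh)
          exact absurd hg2 (not_lt.2 this)
        have := (abs_le.1 hg1.1).2
        linarith
      rw [abs_le]; constructor <;> linarith
    have hx0 : x = L (wl L x) := by
      have := (approx 1 one_pos).self_of_nhds
      simp only [sub_self, mul_zero, sub_zero, abs_zero] at this
      linarith [abs_nonpos_iff.1 this]
    refine HasDerivAt.differentiableAt (f' := d⁻¹) ?_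
    rw [hasDerivAt_iff_isLittleO, Asymptotics.isLittleO_iff]
    intro C hC
    filter_upwards [approx (C * c * d) (by positivity), hev] with y hy hy0
    rw [← hx0] at hy
    have h8 := (K2 y hy0).2
    simp only [smul_eq_mul, Real.norm_eq_abs]
    have e : wl L y - wl L x - (y - x) * d⁻¹ = -(d⁻¹ * (y - x - d * (wl L y - wl L x))) := by
      field_simp; ring
    rw [e, abs_neg, abs_mul, abs_of_pos (inv_pos.2 hd0), inv_mul_le_iff₀ hd0]
    calc _ ≤ _ := hy
      _ = C * d * (c * |wl L y - wl L x|) := by ring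
      _ ≤ C * d * |y - x| := by gcongr
      _ = _ := by ring
  · refine HasDerivAt.differentiableAt (f' := 0) ?_
    rw [hasDerivAt_iff_isLittleO, Asymptotics.isLittleO_iff]
    intro C hC
    filter_upwards [hcont.eventually (hinf (1/(c*C))), hev] with y hy hy0
    simp only [smul_eq_mul, Real.norm_eq_abs, mul_zero, sub_zero]
    have h8 := (K2 y hy0).1
    rw [div_mul_eq_mul_div, one_mul, div_le_iff₀ (by positivity)] at hy
    calc _ ≤ _ := hy
      _ = C * (c * |f (wl L y) - f (wl L x)|) := by ring
      _ ≤ _ := by gcongr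

lemma cl_half {L : ℝ → ℝ} (hL : Nice L) (x : ℝ) (h0 : L 0 ≤ x) (hx : ∀ a ∈ Ioc (0:ℝ) 1, x < L a)
    (S : Set ℝ) (hS : ∀ a ∈ Ioc (0:ℝ) 1, L a ∈ S) : x ∈ closure S := by
  rw [Metric.mem_closure_iff]
  intro ε hε
  obtain ⟨b, hb, hb2⟩ := hL.rc (x + ε/2) (by linarith)
  refine ⟨L b, hS b hb, ?_⟩
  have := hx b hb
  rw [Real.dist_eq, abs_lt]; constructor <;> linarith

noncomputable def mkF (L K : ℝ → ℝ) (hL : Nice L) (hK : Nice K) (h1 : L 1 ≤ - K 1) : FuzzyNumber where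
  u x := sSup {b | b ∈ Icc (0:ℝ) 1 ∧ (L b ≤ x ∧ K b ≤ -x)}
  mem_unit x := sup_unit _
  lo := L
  hi a := - K a
  cut_eq a ha := by
    ext x
    have := sup_spec (fun b => L b ≤ x ∧ K b ≤ -x)
      (fun _ _ h0 hab h1 hb => ⟨(hL.mono ⟨h0, hab.trans h1⟩ ⟨h0.trans hab, h1⟩ hab).trans hb.1,
        (hK.mono ⟨h0, hab.trans h1⟩ ⟨h0.trans hab, h1⟩ hab).trans hb.2⟩)
      (fun a ha hb => ⟨hL.lc a ha x (fun b h => (hb b h).1), hK.lc a ha _ (fun b h => (hb b h).2)⟩) a ha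
    refine Iff.trans this ?_
    rw [mem_Icc]
    constructor <;> rintro ⟨h, h'⟩ <;> exact ⟨h, by linarith⟩
  cut0_eq := by
    have hbd : ∀ x, BddAbove {b | b ∈ Icc (0:ℝ) 1 ∧ (L b ≤ x ∧ K b ≤ -x)} := fun x => ⟨1, fun b hb => hb.1.2⟩
    have hin : ∀ x, ∀ a ∈ Ioc (0:ℝ) 1, L a ≤ x → K a ≤ -x → 0 < sSup {b | b ∈ Icc (0:ℝ) 1 ∧ (L b ≤ x ∧ K b ≤ -x)} := by
      intro x a ha h1 h2
      exact lt_of_lt_of_le ha.1 (le_csSup (hbd x) ⟨⟨ha.1.le, ha.2⟩, h1, h2⟩)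
    have hLK : ∀ a ∈ Ioc (0:ℝ) 1, L a ≤ L 1 ∧ K a ≤ K 1 := fun a ha =>
      ⟨hL.mono ⟨ha.1.le, ha.2⟩ ⟨zero_le_one, le_rfl⟩ ha.2, hK.mono ⟨ha.1.le, ha.2⟩ ⟨zero_le_one, le_rfl⟩ ha.2⟩
    apply Subset.antisymm
    · apply closure_minimal _ isClosed_Icc
      intro x hx
      have hne : {b | b ∈ Icc (0:ℝ) 1 ∧ (L b ≤ x ∧ K b ≤ -x)}.Nonempty := by
        by_contra hh
        rw [not_nonempty_iff_eq_empty] at hh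
        have hx' : 0 < sSup {b | b ∈ Icc (0:ℝ) 1 ∧ (L b ≤ x ∧ K b ≤ -x)} := hx
        rw [hh, Real.sSup_empty] at hx'
        exact lt_irrefl _ hx'
      obtain ⟨b, hb, hb1, hb2⟩ := hne
      have h1 := hL.mono ⟨le_rfl, zero_le_one⟩ hb hb.1
      have h2 := hK.mono ⟨le_rfl, zero_le_one⟩ hb hb.1
      exact ⟨by linarith, by linarith⟩
    · rintro x ⟨hx1, hx2⟩
      by_cases hex : ∃ a ∈ Ioc (0:ℝ) 1, L a ≤ x ∧ K a ≤ -x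
      · obtain ⟨a, ha, h1, h2⟩ := hex
        exact subset_closure (hin x a ha h1 h2)
      · push Not at hex
        have h11 : (1:ℝ) ∈ Ioc (0:ℝ) 1 := ⟨one_pos, le_rfl⟩
        rcases lt_or_ge x (L 1) with hc | hc
        · apply cl_half hL x hx1
          · intro a ha
            by_contra hh
            have := hex a ha (not_lt.1 hh)
            linarith [(hLK a ha).2]
          · intro a ha
            have := hLK a ha
            exact hin _ a ha le_rfl (by linarith)
        · have hK1 := hex 1 h11 hc
          have hneg : -x ∈ closure (Neg.neg ⁻¹' {x | 0 < sSup {b | b ∈ Icc (0:ℝ) 1 ∧ (L b ≤ x ∧ K b ≤ -x)}}) := by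
            apply cl_half hK (-x) (by linarith)
            · intro a ha
              exact hex a ha (by linarith [(hLK a ha).1])
            · intro a ha
              have := hLK a ha
              exact hin _ a ha (by linarith) (by simp)
          have hpre := Continuous.closure_preimage_subset (continuous_neg (G := ℝ)) {x | 0 < sSup {b | b ∈ Icc (0:ℝ) 1 ∧ (L b ≤ x ∧ K b ≤ -x)}} hneg
          rw [mem_preimage, neg_neg] at hpre
          exact hpre
  one_cut_nonempty := ⟨L 1, le_csSup ⟨1, fun b hb => hb.1.2⟩ ⟨⟨zero_le_one, le_rfl⟩, le_rfl, by linarith⟩⟩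

lemma mkF_min (L K : ℝ → ℝ) (hL : Nice L) (hK : Nice K) (h1 : L 1 ≤ - K 1) (x : ℝ) :
    (mkF L K hL hK h1).u x = min (wl L x) (wl K (-x)) := by
  apply unit_ext ((mkF L K hL hK h1).mem_unit x)
  · exact ⟨le_min (wl_unit _ _).1 (wl_unit _ _).1, (min_le_left _ _).trans (wl_unit _ _).2⟩
  · intro c hc
    rw [le_min_iff, hL.wl_spec _ _ hc, hK.wl_spec _ _ hc]
    have := Set.ext_iff.1 ((mkF L K hL hK h1).cut_eq c hc) x
    refine Iff.trans this ?_
    simp only [mkF, mem_Icc]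
    constructor <;> rintro ⟨h, h'⟩ <;> exact ⟨h, by linarith⟩

lemma mkF_diff (L K : ℝ → ℝ) (hL : Nice L) (hK : Nice K) (h1 : L 1 ≤ - K 1)
    (dL : ∀ x, L 0 < x → DifferentiableAt ℝ (wl L) x) (dK : ∀ x, K 0 < x → DifferentiableAt ℝ (wl K) x) :
    (mkF L K hL hK h1).IsDifferentiable := by
  rintro x ⟨hx1, hx2⟩
  have hx1 : L 0 < x := hx1
  have hx2 : x < - K 0 := hx2
  have e : (mkF L K hL hK h1).u = fun x => min (wl L x) (wl K (-x)) := funext (mkF_min L K hL hK h1)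
  rw [e]
  have hA := dL x hx1
  have hB : DifferentiableAt ℝ (fun y => wl K (-y)) x :=
    DifferentiableAt.comp (g := wl K) (f := fun y => -y) x (dK (-x) (by linarith)) differentiableAt_id.neg
  have h11 : (1:ℝ) ∈ Ioc (0:ℝ) 1 := ⟨one_pos, le_rfl⟩
  have hA1 : ∀ y, L 1 ≤ y → wl L y = 1 := fun y hy => le_antisymm (wl_unit _ _).2 ((hL.wl_spec y 1 h11).2 hy)
  have hB1 : ∀ y, K 1 ≤ -y → wl K (-y) = 1 := fun y hy => le_antisymm (wl_unit _ _).2 ((hK.wl_spec _ 1 h11).2 hy)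
  rcases lt_or_ge x (L 1) with hc | hc
  · apply hA.congr_of_eventuallyEq
    filter_upwards [gt_mem_nhds hc] with y hy
    rw [hB1 y (by linarith)]; exact min_eq_left (wl_unit _ _).2
  rcases lt_or_ge (-K 1) x with hc2 | hc2
  · apply hB.congr_of_eventuallyEq
    filter_upwards [lt_mem_nhds hc2] with y hy
    rw [hA1 y (by linarith)]; exact min_eq_right (wl_unit _ _).2
  have a1 := hA1 x hc
  have b1 := hB1 x (by linarith)
  have hA' : HasDerivAt (wl L) 0 x := by
    have hm : IsLocalMax (wl L) x := Eventually.of_forall (fun y => by rw [a1]; exact (wl_unit _ _).2)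
    have := hA.hasDerivAt
    rwa [hm.deriv_eq_zero] at this
  have hB' : HasDerivAt (fun y => wl K (-y)) 0 x := by
    have hm : IsLocalMax (fun y => wl K (-y)) x := Eventually.of_forall (fun y => by simp only [b1]; exact (wl_unit _ _).2)
    have := hB.hasDerivAt
    rwa [hm.deriv_eq_zero] at this
  have hS := hA'.add hB'
  refine HasDerivAt.differentiableAt (f' := 0) ?_
  rw [hasDerivAt_iff_isLittleO] at hS ⊢
  refine Asymptotics.IsBigO.trans_isLittleO ?_ hS
  apply Asymptotics.IsBigO.of_bound 1
  filter_upwards with y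
  have ha := (wl_unit L y).2
  have hb := (wl_unit K (-y)).2
  simp only [Pi.add_apply, a1, b1, smul_eq_mul, add_zero, mul_zero, sub_zero, min_self, Real.norm_eq_abs, one_mul]
  rw [abs_of_nonpos (by linarith [min_le_left (wl L y) (wl K (-y))]), abs_of_nonpos (by linarith)]
  rcases min_choice (wl L y) (wl K (-y)) with h | h <;> rw [h] <;> linarith

lemma cut_ne (u : FuzzyNumber) : ∃ x, ∀ a ∈ Icc (0:ℝ) 1, x ∈ Icc (u.lo a) (u.hi a) := by
  obtain ⟨x, hx⟩ := u.one_cut_nonempty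
  refine ⟨x, fun a ha => ?_⟩
  rcases ha.1.eq_or_lt with h | h
  · rw [← h, ← u.cut0_eq]; apply subset_closure; show 0 < u.u x; linarith
  · rw [← u.cut_eq a ⟨h, ha.2⟩]; show a ≤ u.u x; linarith [ha.2]

lemma nice_lo (u : FuzzyNumber) : Nice u.lo := by
  obtain ⟨x0, hx0⟩ := cut_ne u
  have hmono : ∀ a ∈ Icc (0:ℝ) 1, ∀ b ∈ Icc (0:ℝ) 1, a ≤ b → Icc (u.lo b) (u.hi b) ⊆ Icc (u.lo a) (u.hi a) := by
    intro a ha b hb hab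
    rcases hab.eq_or_lt with h | h
    · rw [h]
    · have hb0 : 0 < b := lt_of_le_of_lt ha.1 h
      rw [← u.cut_eq b ⟨hb0, hb.2⟩]
      intro x (hx : b ≤ u.u x)
      rcases ha.1.eq_or_lt with h0 | h0
      · rw [← h0, ← u.cut0_eq]; apply subset_closure; show 0 < u.u x; linarith
      · rw [← u.cut_eq a ⟨h0, ha.2⟩]; show a ≤ u.u x; linarith
  refine ⟨?_, ?_, ?_⟩
  · intro a ha b hb hab
    have h := hx0 b hb
    exact (hmono a ha b hb hab ⟨le_rfl, h.1.trans h.2⟩).1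
  · intro a ha x hx
    by_contra hlt
    push Not at hlt
    have haI : a ∈ Icc (0:ℝ) 1 := ⟨ha.1.le, ha.2⟩
    have h := hx0 a haI
    have : ∀ b ∈ Ioo 0 a, b ≤ u.u x := by
      intro b hb
      have hbI : b ∈ Icc (0:ℝ) 1 := ⟨hb.1.le, hb.2.le.trans ha.2⟩
      have h2 := (hmono b hbI a haI hb.2.le ⟨le_rfl, h.1.trans h.2⟩).2
      have h3 : x ∈ Icc (u.lo b) (u.hi b) := ⟨hx b hb, by linarith⟩
      rw [← u.cut_eq b ⟨hb.1, hbI.2⟩] at h3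
      exact h3
    have h4 : a ≤ u.u x := by
      by_contra hh
      push Not at hh
      have hu := (u.mem_unit x).1
      have := this ((u.u x + a)/2) ⟨by linarith [ha.1], by linarith⟩
      linarith
    have h5 : x ∈ {x | a ≤ u.u x} := h4
    rw [u.cut_eq a ha] at h5
    linarith [h5.1]
  · intro x hx
    have h := hx0 0 ⟨le_rfl, zero_le_one⟩
    have h1 : u.lo 0 ∈ closure {x | 0 < u.u x} := by rw [u.cut0_eq]; exact ⟨le_rfl, h.1.trans h.2⟩
    obtain ⟨z, hz, hz2⟩ := Metric.mem_closure_iff.1 h1 (x - u.lo 0) (by linarith)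
    have hz : 0 < u.u z := hz
    have hb : u.u z ∈ Ioc (0:ℝ) 1 := ⟨hz, (u.mem_unit z).2⟩
    refine ⟨u.u z, hb, ?_⟩
    have h5 : z ∈ {x | u.u z ≤ u.u x} := le_refl (u.u z)
    rw [u.cut_eq _ hb] at h5
    rw [Real.dist_eq, abs_lt] at hz2
    linarith [h5.1]

def negF (u : FuzzyNumber) : FuzzyNumber where
  u x := u.u (-x)
  mem_unit x := u.mem_unit _
  lo a := - u.hi a
  hi a := - u.lo a
  cut_eq a ha := by
    have := u.cut_eq a ha
    ext x
    have h := Set.ext_iff.1 this (-x)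
    refine Iff.trans h ?_
    rw [mem_Icc, mem_Icc]
    constructor <;> rintro ⟨h, h'⟩ <;> constructor <;> linarith
  cut0_eq := by
    have h := u.cut0_eq
    have e : {x | 0 < u.u (-x)} = (Homeomorph.neg ℝ) ⁻¹' {x | 0 < u.u x} := rfl
    rw [e, ← Homeomorph.preimage_closure, h]
    ext x
    simp only [Homeomorph.coe_neg, mem_preimage, mem_Icc]
    constructor <;> rintro ⟨h, h'⟩ <;> constructor <;> linarith
  one_cut_nonempty := by
    obtain ⟨x, hx⟩ := u.one_cut_nonempty
    exact ⟨-x, by simpa using hx⟩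

lemma nice_hi (u : FuzzyNumber) : Nice (fun a => - u.hi a) := nice_lo (negF u)

lemma nice_zero : Nice (fun _ => (0:ℝ)) :=
  ⟨fun _ _ _ _ _ => le_rfl, fun a ha x h => h (a/2) ⟨by linarith [ha.1], by linarith [ha.1]⟩,
    fun x hx => ⟨1, ⟨one_pos, le_rfl⟩, hx.le⟩⟩

lemma nice_null {L : ℝ → ℝ} (h : Nice L) : volume {a | a ∈ Icc (0:ℝ) 1 ∧ ¬ DifferentiableWithinAt ℝ L (Icc 0 1) a} = 0 := by
  have := h.mono.ae_differentiableWithinAt measurableSet_Icc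
  rw [ae_restrict_iff' measurableSet_Icc, ae_iff] at this
  refine measure_mono_null (fun a ha => ?_) this
  exact fun h => ha.2 (h ha.1)

theorem stmt18 (u : FuzzyNumber)
    (hfin : {x ∈ Set.Icc (u.lo 0) (u.hi 0) | ¬ ContinuousAt u.u x}.Finite) :
    ∃ v : ℕ → FuzzyNumber, ∃ W : ℕ → FuzzyNumber,
      (∀ n, (v n).IsDifferentiable) ∧
      (∀ n, (W n).u = conv u.u (v n).u ∧ (W n).IsDifferentiable) ∧
      Filter.Tendsto (fun n => dInf (W n) u) Filter.atTop (nhds 0) := by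
  clear hfin
  have n1 := nice_lo u
  have n2 := nice_hi u
  obtain ⟨x0, hx0⟩ := cut_ne u
  obtain ⟨f, hf, hfe, hfd⟩ := zah
    (({a | a ∈ Icc (0:ℝ) 1 ∧ ¬ DifferentiableWithinAt ℝ u.lo (Icc 0 1) a} ∪
      {a | a ∈ Icc (0:ℝ) 1 ∧ ¬ DifferentiableWithinAt ℝ (fun a => - u.hi a) (Icc 0 1) a}) ∪ {1})
    (measure_union_null (measure_union_null (nice_null n1) (nice_null n2)) (by simp))
  have hfe : Expd f := hfe
  have H : ∀ a ∈ Ioc (0:ℝ) 1, (a < 1 ∧ (DifferentiableAt ℝ u.lo a ∧ DifferentiableAt ℝ (fun a => - u.hi a) a)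
      ∧ DifferentiableAt ℝ f a) ∨ (∀ M : ℝ, ∀ᶠ y in 𝓝 a, M * |y - a| ≤ |f y - f a|) := by
    intro a ha
    have haI : a ∈ Icc (0:ℝ) 1 := ⟨ha.1.le, ha.2⟩
    rcases hfd a haI with ⟨h1, h2⟩ | h
    · left
      simp only [mem_union, mem_singleton_iff, not_or] at h2
      have ha1 : a < 1 := lt_of_le_of_ne ha.2 h2.2
      have hn : Icc (0:ℝ) 1 ∈ 𝓝 a := Icc_mem_nhds ha.1 ha1
      refine ⟨ha1, ⟨?_, ?_⟩, h1⟩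
      · by_contra hh
        exact h2.1.1 ⟨haI, fun hd => hh (hd.differentiableAt hn)⟩
      · by_contra hh
        exact h2.1.2 ⟨haI, fun hd => hh (hd.differentiableAt hn)⟩
    · right; exact h
  set c : ℕ → ℝ := fun n => 1 / ((n:ℝ) + 1) with hcdef
  have hc : ∀ n, 0 < c n := fun n => by positivity
  have hmf : ∀ n a b, a ≤ b → c n * f a ≤ c n * f b := fun n a b hab =>
    mul_le_mul_of_nonneg_left (by linarith [hfe a b hab]) (hc n).le
  have z0 := fun n => nice_zero.add hf hfe (c n) (hc n)
  have z1 := fun n => n1.add hf hfe (c n) (hc n)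
  have z2 := fun n => n2.add hf hfe (c n) (hc n)
  have h11 := hx0 1 ⟨zero_le_one, le_rfl⟩
  let v : ℕ → FuzzyNumber := fun n => mkF _ _ (z0 n) (z0 n) (by simp)
  let W : ℕ → FuzzyNumber := fun n => mkF _ _ (z1 n) (z2 n) (by
    simp only [sub_self, mul_zero, add_zero, neg_neg]; exact h11.1.trans h11.2)
  refine ⟨v, W, ?_, ?_, ?_⟩
  · intro n
    have hd := fun x => nice_zero.diff hf hfe (c n) (hc n) (fun a ha => by
      rcases H a ha with ⟨h1, -, h3⟩ | h
      · exact Or.inl ⟨h1, differentiableAt_const _, h3⟩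
      · exact Or.inr h) x
    exact mkF_diff _ _ _ _ _ hd hd
  · intro n
    constructor
    · ext x
      have hvu := (v n).mem_unit
      have hnn : 0 ≤ conv u.u (v n).u x :=
        Real.iSup_nonneg (fun y => le_min (u.mem_unit _).1 (hvu _).1)
      have hbd : BddAbove (range fun y => min (u.u y) ((v n).u (x - y))) :=
        ⟨1, by rintro _ ⟨y, rfl⟩; exact (min_le_left _ _).trans (u.mem_unit y).2⟩
      apply le_antisymm
      · refine Real.sSup_le ?_ hnn
        rintro a ⟨haI, h1, h2⟩
        rcases haI.1.eq_or_lt with h | h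
        · rw [← h]; exact hnn
        · have ha : a ∈ Ioc (0:ℝ) 1 := ⟨h, haI.2⟩
          have hρ := hmf n a 1 ha.2
          have hl := hx0 a haI
          set y := max (u.lo a) (x + c n * (f a - f 1)) with hy
          have y1 : u.lo a ≤ y := le_max_left _ _
          have y2 : x + c n * (f a - f 1) ≤ y := le_max_right _ _
          have y3 : y ≤ u.hi a := max_le (hl.1.trans hl.2) (by linarith)
          have y4 : y ≤ x - c n * (f a - f 1) := max_le (by linarith) (by linarith)
          have m1 : a ≤ u.u y := by
            have : y ∈ Icc (u.lo a) (u.hi a) := ⟨y1, y3⟩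
            rw [← u.cut_eq a ha] at this; exact this
          have m2 : a ≤ (v n).u (x - y) := by
            have : x - y ∈ Icc ((v n).lo a) ((v n).hi a) := by
              simp only [v, mkF]
              constructor <;> linarith
            rw [← (v n).cut_eq a ha] at this; exact this
          exact (le_min m1 m2).trans (le_ciSup hbd y)
      · apply ciSup_le
        intro y
        rcases le_or_gt (min (u.u y) ((v n).u (x - y))) 0 with h | h
        · exact h.trans ((W n).mem_unit x).1
        · set b := min (u.u y) ((v n).u (x - y)) with hb
          have b1 : b ≤ u.u y := min_le_left _ _
          have b2 : b ≤ (v n).u (x - y) := min_le_right _ _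
          have hbI : b ∈ Ioc (0:ℝ) 1 := ⟨h, b1.trans (u.mem_unit y).2⟩
          have c1 : y ∈ {x | b ≤ u.u x} := b1
          have c2 : x - y ∈ {x | b ≤ (v n).u x} := b2
          rw [u.cut_eq b hbI] at c1
          rw [(v n).cut_eq b hbI] at c2
          simp only [v, mkF, mem_Icc] at c1 c2
          have : x ∈ Icc ((W n).lo b) ((W n).hi b) := by
            simp only [W, mkF, mem_Icc]
            constructor <;> linarith [c1.1, c1.2, c2.1, c2.2]
          rw [← (W n).cut_eq b hbI] at this; exact this
    · apply mkF_diff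
      · exact n1.diff hf hfe (c n) (hc n) (fun a ha => by
          rcases H a ha with ⟨h1, h2, h3⟩ | h
          · exact Or.inl ⟨h1, h2.1, h3⟩
          · exact Or.inr h)
      · exact n2.diff hf hfe (c n) (hc n) (fun a ha => by
          rcases H a ha with ⟨h1, h2, h3⟩ | h
          · exact Or.inl ⟨h1, h2.2, h3⟩
          · exact Or.inr h)
  · have ht : Tendsto (fun n => c n * (f 1 - f 0)) atTop (𝓝 0) := by
      have := (tendsto_one_div_add_atTop_nhds_zero_nat (𝕜 := ℝ)).mul_const (f 1 - f 0)
      rw [zero_mul] at this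
      exact this
    refine squeeze_zero (fun n => Real.iSup_nonneg (fun a => le_max_of_le_left (abs_nonneg _))) (fun n => ?_) ht
    haveI : Nonempty (Icc (0:ℝ) 1) := ⟨⟨0, le_rfl, zero_le_one⟩⟩
    apply ciSup_le
    rintro ⟨a, ha⟩
    have h1 := hmf n a 1 ha.2
    have h2 := hmf n 0 a ha.1
    simp only [W, mkF]
    apply max_le <;> rw [abs_le] <;> constructor <;> linarith
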